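/- Let T be a tree on n vertices equipped with a rooted labeling. If T is not a path, then height I_T ≤ n-2; in particular, S/I_T is not a complete intersection. -/

import Mathlib

open MvPolynomial

/-- The Hankel binomial `g_{ij} = x_i x_{j+1} - x_j x_{i+1}` (0-indexed vertices). -/
noncomputable def hg (n : ℕ) (K : Type*) [Field K] (i j : Fin n) :
    MvPolynomial (Fin (n + 1)) K :=
  X i.castSucc * X j.succ - X j.castSucc * X i.succ

/-- The generating set of the Hankel edge ideal of a graph `G` on `[n]`. -/
noncomputable def hgenSet (n : ℕ) (K : Type*) [Field K] (G : SimpleGraph (Fin n)) :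
    Set (MvPolynomial (Fin (n + 1)) K) :=
  { f | ∃ i j : Fin n, i < j ∧ G.Adj i j ∧ f = hg n K i j }

/-- The Hankel edge ideal `I_G`. -/
noncomputable def hankelIdeal (n : ℕ) (K : Type*) [Field K] (G : SimpleGraph (Fin n)) :
    Ideal (MvPolynomial (Fin (n + 1)) K) :=
  Ideal.span (hgenSet n K G)

/-- `I_X`, the ideal of 2-minors of the 2×n Hankel matrix, i.e. `I_{K_n}`. -/
noncomputable def IX (n : ℕ) (K : Type*) [Field K] :
    Ideal (MvPolynomial (Fin (n + 1)) K) :=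
  hankelIdeal n K ⊤

/-- The height of an ideal: the infimum of the heights of primes containing it. -/
noncomputable def ht {R : Type*} [CommRing R] (I : Ideal R) : ℕ∞ :=
  ⨅ (p : PrimeSpectrum R) (_ : I ≤ p.asIdeal), Order.height p

/-- The minimal number of generators of an ideal. -/
noncomputable def mu {R : Type*} [CommRing R] (I : Ideal R) : ℕ∞ :=
  ⨅ (s : Finset R) (_ : Ideal.span (s : Set R) = I), (s.card : ℕ∞)

/-- The arithmetical rank of an ideal. -/
noncomputable def ara {R : Type*} [CommRing R] (I : Ideal R) : ℕ∞ :=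
  ⨅ (s : Finset R) (_ : (Ideal.span (s : Set R)).radical = I.radical), (s.card : ℕ∞)

/-- The labeled path `L_n` with edges `{i, i+1}` (0-indexed). -/
def pathG (n : ℕ) : SimpleGraph (Fin n) :=
  SimpleGraph.fromRel (fun i j => (i : ℕ) + 1 = (j : ℕ))

/-- The labeled cycle `C_n` with edges `{i, i+1}` and `{0, n-1}` (0-indexed). -/
def cycleG (n : ℕ) : SimpleGraph (Fin n) :=
  SimpleGraph.fromRel (fun i j =>
    (i : ℕ) + 1 = (j : ℕ) ∨ ((i : ℕ) = 0 ∧ (j : ℕ) = n - 1))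

/-- The monomial prime ideal generated by the variables with index in `[lo, hi]` (0-indexed). -/
noncomputable def Pvars (n : ℕ) (K : Type*) [Field K] (lo hi : ℕ) :
    Ideal (MvPolynomial (Fin (n + 1)) K) :=
  Ideal.span { f | ∃ i : Fin (n + 1), lo ≤ (i : ℕ) ∧ (i : ℕ) ≤ hi ∧ f = X i }

/-- A rooted (BFS) labeling of a tree on `Fin n` with root `0`: every non-root vertex `v`
has a parent, a neighbor with a smaller label, and the labels are assigned consecutively,
i.e. the parent function is monotone on non-root vertices. -/
def IsRootedLabeling {n : ℕ} (T : SimpleGraph (Fin n)) (parent : Fin n → Fin n) : Prop :=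
  (∀ v : Fin n, (v : ℕ) ≠ 0 → T.Adj (parent v) v ∧ parent v < v) ∧
    ∀ u v : Fin n, (u : ℕ) ≠ 0 → (v : ℕ) ≠ 0 → u ≤ v → parent u ≤ parent v

/-- `T` is a path graph, i.e. isomorphic (as an abstract graph) to `L_n`. -/
def IsPathGraph {n : ℕ} (T : SimpleGraph (Fin n)) : Prop :=
  ∃ e : Fin n ≃ Fin n, ∀ i j : Fin n, T.Adj i j ↔ (pathG n).Adj (e i) (e j)

/-- A leaf of a graph: a vertex with exactly one neighbor. -/
def IsLeaf {n : ℕ} (T : SimpleGraph (Fin n)) (v : Fin n) : Prop :=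
  (T.neighborSet v).ncard = 1

/-!
A tree whose degrees are all at most `2` is a path: a longest path in it already contains every
neighbor of each of its vertices. So a tree that is not a path has a vertex `v` of degree at least
`3`. Every generator attached to an edge at `v` lies in `(x_v, x_{v+1})`, so `I_T` is contained in
a proper ideal generated by `2 + (|E(T)| - deg v) ≤ |E(T)| - 1 = n - 2` elements, and Krull's height
theorem bounds `height I_T`. On the other hand the `|E(T)|` generators are linearly independent
forms of degree `2`, hence a minimal generating set.
-/

open SimpleGraph

section LongestPath

variable {V : Type*} {G : SimpleGraph V} {u v : V}

/-- A walk is a longest path of `G` if it is a path and no path of `G`, whatever its endpoints,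
is longer. -/
structure IsLongestPath (p : G.Walk u v) : Prop where
  isPath : p.IsPath
  length_le : ∀ ⦃w x : V⦄ (q : G.Walk w x), q.IsPath → q.length ≤ p.length

namespace IsLongestPath

variable {p : G.Walk u v}

theorem reverse (hp : IsLongestPath p) : IsLongestPath p.reverse where
  isPath := hp.isPath.reverse
  length_le _ _ q hq := by simpa using hp.length_le q hq

theorem mem_support_of_adj_start (hp : IsLongestPath p) {w : V} (huw : G.Adj u w) :
    w ∈ p.support := by
  by_contra hw
  have := hp.length_le (.cons huw.symm p) (hp.isPath.cons hw)
  simp at this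

theorem toSubgraph_adj_start (hp : IsLongestPath p) (hG : G.IsAcyclic) {w : V}
    (huw : G.Adj u w) : p.toSubgraph.Adj u w := by
  have hw := hp.mem_support_of_adj_start huw
  have hnil : ¬ p.Nil := fun h ↦
    huw.ne' (by simpa [Walk.nil_iff_support_eq.mp h] using hw)
  rw [hG.eq_snd_of_adj_start hp.isPath huw hw]
  exact p.toSubgraph_adj_snd hnil

theorem toSubgraph_adj [G.LocallyFinite] (hp : IsLongestPath p) (hG : G.IsAcyclic)
    (hdeg : ∀ x, G.degree x ≤ 2) {x y : V} (hx : x ∈ p.support) (hxy : G.Adj x y) :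
    p.toSubgraph.Adj x y := by
  obtain ⟨i, rfl, hi⟩ := Walk.mem_support_iff_exists_getVert.mp hx
  rcases eq_or_ne i 0 with rfl | hi_pos
  · rw [Walk.getVert_zero] at hxy ⊢
    exact hp.toSubgraph_adj_start hG hxy
  rcases hi.eq_or_lt with rfl | hi_lt
  · rw [Walk.getVert_length] at hxy ⊢
    simpa using hp.reverse.toSubgraph_adj_start hG hxy
  · have hcard : (G.neighborSet (p.getVert i)).ncard ≤
        (p.toSubgraph.neighborSet (p.getVert i)).ncard := by
      rw [hp.isPath.ncard_neighborSet_toSubgraph_internal_eq_two hi_pos hi_lt,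
        Set.ncard_eq_toFinset_card']
      exact hdeg _
    have heq := Set.eq_of_subset_of_ncard_le (p.toSubgraph.neighborSet_subset _) hcard
    exact heq.ge hxy

end IsLongestPath

theorem exists_isLongestPath (G : SimpleGraph V) [Nonempty V] [Finite G.edgeSet] :
    ∃ (u v : V) (p : G.Walk u v), IsLongestPath p :=
  let ⟨u, v, p, hp, hmax⟩ := Walk.exists_isPath_forall_isPath_length_le_length G
  ⟨u, v, p, hp, hmax⟩

theorem subgraph_eq_top_of_forall_adj (hG : G.Preconnected) {H : G.Subgraph}
    (hne : H.verts.Nonempty) (hH : ∀ ⦃x y⦄, x ∈ H.verts → G.Adj x y → H.Adj x y) : H = ⊤ := by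
  obtain ⟨x, hx⟩ := hne
  have hverts : ∀ y, y ∈ H.verts := by
    intro y
    by_contra hy
    obtain ⟨q⟩ := hG x y
    obtain ⟨d, -, hfst, hsnd⟩ := q.exists_boundary_dart H.verts hx hy
    exact hsnd (H.edge_vert (hH hfst d.adj).symm)
  ext y z
  · simpa using hverts y
  · simpa using ⟨H.adj_sub, fun h ↦ hH (hverts y) h⟩

theorem exists_iso_pathGraph_of_degree_le_two [Finite G.edgeSet] [G.LocallyFinite]
    (hG : G.IsTree) (hdeg : ∀ x, G.degree x ≤ 2) : ∃ m, Nonempty (G ≃g pathGraph m) := by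
  classical
  have := hG.connected.nonempty
  obtain ⟨u, v, p, hp⟩ := exists_isLongestPath G
  have htop : p.toSubgraph = ⊤ :=
    subgraph_eq_top_of_forall_adj hG.connected.preconnected ⟨u, p.start_mem_verts_toSubgraph⟩
      fun x y hx hxy ↦ hp.toSubgraph_adj hG.isAcyclic hdeg (p.mem_verts_toSubgraph.mp hx) hxy
  have e : pathGraph (p.length + 1) ≃g (⊤ : G.Subgraph).coe :=
    htop ▸ hp.isPath.pathGraphIsoToSubgraph
  exact ⟨_, ⟨(e.trans Subgraph.topIso).symm⟩⟩

theorem pathG_eq_pathGraph (n : ℕ) : pathG n = pathGraph n := by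
  ext i j
  rw [pathGraph_adj, pathG, fromRel_adj, and_iff_right_iff_imp]
  rintro h rfl
  omega

theorem exists_three_le_degree_of_not_isPathGraph {n : ℕ} {T : SimpleGraph (Fin n)}
    [DecidableRel T.Adj] (hT : T.IsTree) (hpath : ¬ IsPathGraph T) : ∃ v, 3 ≤ T.degree v := by
  by_contra! hdeg
  obtain ⟨m, ⟨e⟩⟩ :=
    exists_iso_pathGraph_of_degree_le_two hT fun v ↦ Nat.le_of_lt_succ (hdeg v)
  obtain rfl : n = m := by simpa using Fintype.card_congr e.toEquiv
  refine hpath ⟨e.toEquiv, fun i j ↦ ?_⟩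
  rw [pathG_eq_pathGraph]
  exact e.map_rel_iff.symm

end LongestPath

section Height

variable {R : Type*} [CommRing R]

theorem ht_eq_height (I : Ideal R) : ht I = I.height := by
  apply le_antisymm
  · rw [I.height_eq_inf_minimalPrimes]
    refine le_iInf₂ fun J hJ ↦ ?_
    let P : PrimeSpectrum R := ⟨J, hJ.isPrime⟩
    exact (iInf₂_le P hJ.1.2).trans_eq P.height_eq_orderHeight.symm
  · exact le_iInf₂ fun P hP ↦ (Ideal.height_mono hP).trans_eq P.height_eq_orderHeight

theorem ht_le_encard_of_le_span [IsNoetherianRing R] {I : Ideal R} {s : Set R}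
    (hI : I ≤ Ideal.span s) (hs : Ideal.span s ≠ ⊤) : ht I ≤ s.encard := by
  rw [ht_eq_height]
  exact (Ideal.height_mono hI).trans <|
    (Ideal.height_le_spanFinrank _ hs).trans (Submodule.spanFinrank_span_le_encard s)

end Height

section LinearIndependence

theorem linearIndependent_of_triangular {ι α R M : Type*} [Ring R] [NoZeroDivisors R]
    [AddCommGroup M] [Module R M] [LinearOrder α] {v : ι → M} (φ : ι → M →ₗ[R] R) (r : ι → α)
    (hdiag : ∀ i, φ i (v i) ≠ 0) (hzero : ∀ i j, j ≠ i → r i ≤ r j → φ i (v j) = 0) :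
    LinearIndependent R v := by
  classical
  rw [linearIndependent_iff']
  intro s c hsum
  by_contra! hne
  obtain ⟨i, hi, hmin⟩ :=
    {i ∈ s | c i ≠ 0}.exists_min_image r (by simpa [Finset.Nonempty] using hne)
  rw [Finset.mem_filter] at hi
  have hterm : ∀ j ∈ s, j ≠ i → φ i (c j • v j) = 0 := by
    intro j hj hji
    by_cases hcj : c j = 0
    · simp [hcj]
    · simp [hzero i j hji (hmin j (by simp [hj, hcj]))]
  have happly := congrArg (φ i) hsum
  rw [map_sum, Finset.sum_eq_single_of_mem i hi.1 hterm, map_zero, map_smul, smul_eq_mul] at happly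
  exact (mul_ne_zero hi.2 (hdiag i)) happly

end LinearIndependence

section HomogeneousGenerators

variable {σ R : Type*} {d : ℕ}

theorem homogeneousComponent_mul_of_isHomogeneous [CommSemiring R] (a : MvPolynomial σ R)
    {g : MvPolynomial σ R} (hg : g.IsHomogeneous d) :
    homogeneousComponent d (a * g) = coeff 0 a • g := by
  let _ := gradedAlgebra (σ := σ) (R := R)
  have hdecompose (f : MvPolynomial σ R) (i : ℕ) :
      (DirectSum.decompose (homogeneousSubmodule σ R) f i : MvPolynomial σ R) =
        homogeneousComponent i f :=
    decomposition.decompose'_apply f i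
  rw [← hdecompose, DirectSum.coe_decompose_mul_of_right_mem_of_le _ hg le_rfl, hdecompose,
    Nat.sub_self, homogeneousComponent_zero, C_mul']

theorem homogeneousComponent_mul_of_mem_span [CommSemiring R] {S : Set (MvPolynomial σ R)}
    (hS : ∀ g ∈ S, g.IsHomogeneous d) {f : MvPolynomial σ R} (hf : f ∈ Ideal.span S)
    (a : MvPolynomial σ R) :
    homogeneousComponent d (a * f) = coeff 0 a • homogeneousComponent d f := by
  induction hf using Submodule.span_induction generalizing a with
  | mem g hg =>
    rw [homogeneousComponent_mul_of_isHomogeneous a (hS g hg),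
      homogeneousComponent_eq_self (hS g hg)]
  | zero => simp
  | add f g _ _ hf hg => simp only [mul_add, map_add, hf, hg, smul_add]
  | smul b f _ hf =>
    rw [smul_eq_mul, ← mul_assoc, hf, hf, smul_smul, ← constantCoeff_eq, map_mul]

theorem card_le_card_of_span_eq_span_range [CommRing R] [Nontrivial R] {ι : Type*} [Fintype ι]
    {f : ι → MvPolynomial σ R} (hf : ∀ i, (f i).IsHomogeneous d) (hli : LinearIndependent R f)
    {s : Finset (MvPolynomial σ R)}
    (hs : Ideal.span (s : Set (MvPolynomial σ R)) = Ideal.span (Set.range f)) :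
    Fintype.card ι ≤ s.card := by
  classical
  let W := Submodule.span R (s.image (homogeneousComponent d) : Set (MvPolynomial σ R))
  have hS : ∀ g ∈ Set.range f, g.IsHomogeneous d := Set.forall_mem_range.mpr hf
  have hW : ∀ g ∈ Ideal.span (s : Set (MvPolynomial σ R)), homogeneousComponent d g ∈ W := by
    intro g hg
    induction hg using Submodule.span_induction with
    | mem g hg => exact Submodule.subset_span (by simpa using ⟨g, hg, rfl⟩)
    | zero => simp
    | add g h _ _ hg hh => simpa using add_mem hg hh
    | smul a g hg ih =>
      rw [smul_eq_mul, homogeneousComponent_mul_of_mem_span hS (hs ▸ hg)]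
      exact W.smul_mem _ ih
  have hrange : Set.range f ≤ W := by
    rintro _ ⟨i, rfl⟩
    rw [← homogeneousComponent_eq_self (hf i)]
    exact hW _ (hs ▸ Ideal.subset_span ⟨i, rfl⟩)
  have hcard := linearIndependent_le_span' f hli _ hrange
  simp only [Cardinal.mk_fintype, Nat.cast_le, Finset.coe_sort_coe, Fintype.card_coe] at hcard
  exact hcard.trans Finset.card_image_le

end HomogeneousGenerators

section HankelEdgeIdeal

variable {n : ℕ} {K : Type*} [Field K]

theorem isHomogeneous_hg (i j : Fin n) : (hg n K i j).IsHomogeneous 2 :=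
  ((isHomogeneous_X K _).mul (isHomogeneous_X K _)).sub
    ((isHomogeneous_X K _).mul (isHomogeneous_X K _))

theorem coeff_hg {i j i' j' : Fin n} (hi : i ≤ i') (hij' : i' < j') :
    coeff (Finsupp.single i.castSucc 1 + Finsupp.single j.succ 1) (hg n K i' j') =
      if i' = i ∧ j' = j then 1 else 0 := by
  classical
  have hX : ∀ a b : Fin (n + 1), (X a * X b : MvPolynomial (Fin (n + 1)) K) =
      monomial (Finsupp.single a 1 + Finsupp.single b 1) 1 := by
    simp [X, monomial_mul]
  simp only [hg, hX, coeff_sub, coeff_monomial,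
    Finsupp.single_add_single_eq_single_add_single one_ne_zero one_ne_zero, Fin.ext_iff,
    Fin.val_castSucc, Fin.val_succ]
  grind

variable (n K) in
/-- The generator `g_{ij}`, `i < j`, of a Hankel edge ideal as a function of the unordered edge
`{i, j}`. -/
noncomputable def edgeBinomial (e : Sym2 (Fin n)) : MvPolynomial (Fin (n + 1)) K :=
  hg n K e.inf e.sup

theorem inf_lt_sup_of_not_isDiag {α : Type*} [LinearOrder α] {e : Sym2 α} (he : ¬ e.IsDiag) :
    e.inf < e.sup := by
  induction e with
  | _ a b => simpa [eq_comm] using he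

theorem linearIndepOn_edgeBinomial :
    LinearIndepOn K (edgeBinomial n K) {e | ¬ e.IsDiag} := by
  refine linearIndependent_of_triangular
    (fun e ↦ lcoeff K (Finsupp.single e.1.inf.castSucc 1 + Finsupp.single e.1.sup.succ 1))
    (fun e ↦ e.1.inf) (fun e ↦ ?_) (fun e e' hne hle ↦ ?_)
  · simp [edgeBinomial, coeff_hg le_rfl (inf_lt_sup_of_not_isDiag e.2)]
  · have hne' : ¬ (e'.1.inf = e.1.inf ∧ e'.1.sup = e.1.sup) := by
      rwa [Sym2.inf_eq_inf_and_sup_eq_sup, ← Subtype.ext_iff]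
    simp [edgeBinomial, coeff_hg hle (inf_lt_sup_of_not_isDiag e'.2), hne']

variable (G : SimpleGraph (Fin n))

theorem hgenSet_eq_image_edgeSet : hgenSet n K G = edgeBinomial n K '' G.edgeSet := by
  ext f
  constructor
  · rintro ⟨i, j, hij, hadj, rfl⟩
    exact ⟨s(i, j), hadj, by simp [edgeBinomial, hij.le]⟩
  · rintro ⟨e, he, rfl⟩
    refine ⟨e.inf, e.sup, inf_lt_sup_of_not_isDiag (G.not_isDiag_of_mem_edgeSet he), ?_, rfl⟩
    induction e with
    | _ i j => rcases le_total i j with h | h <;> simpa [h, adj_comm] using he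

theorem card_edgeFinset_le_mu_hankelIdeal [Fintype G.edgeSet] :
    (G.edgeFinset.card : ℕ∞) ≤ mu (hankelIdeal n K G) := by
  have hli : LinearIndependent K fun e : G.edgeSet ↦ edgeBinomial n K e :=
    linearIndepOn_edgeBinomial.mono fun _ ↦ G.not_isDiag_of_mem_edgeSet
  refine le_iInf₂ fun s hs ↦ ?_
  rw [hankelIdeal, hgenSet_eq_image_edgeSet, Set.image_eq_range] at hs
  rw [edgeFinset_card]
  exact_mod_cast card_le_card_of_span_eq_span_range (fun e ↦ isHomogeneous_hg _ _) hli hs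

theorem hankelIdeal_le_span_X_union_deleteIncidenceSet (v : Fin n) :
    hankelIdeal n K G ≤
      Ideal.span ({X v.castSucc, X v.succ} ∪ hgenSet n K (G.deleteIncidenceSet v)) := by
  set J := Ideal.span ({X v.castSucc, X v.succ} ∪ hgenSet n K (G.deleteIncidenceSet v))
  have hcast : X v.castSucc ∈ J := Ideal.subset_span (by simp)
  have hsucc : X v.succ ∈ J := Ideal.subset_span (by simp)
  refine Ideal.span_le.mpr ?_
  rintro _ ⟨i, j, hij, hadj, rfl⟩
  by_cases hi : i = v
  · subst hi
    exact sub_mem (J.mul_mem_right _ hcast) (J.mul_mem_left _ hsucc)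
  by_cases hj : j = v
  · subst hj
    exact sub_mem (J.mul_mem_left _ hsucc) (J.mul_mem_right _ hcast)
  · exact Ideal.subset_span (.inr ⟨i, j, hij, deleteIncidenceSet_adj.mpr ⟨hadj, hi, hj⟩, rfl⟩)

theorem span_ne_top_of_forall_constantCoeff_eq_zero {σ R : Type*} [CommSemiring R] [Nontrivial R]
    {s : Set (MvPolynomial σ R)} (hs : ∀ f ∈ s, constantCoeff f = 0) : Ideal.span s ≠ ⊤ :=
  ne_top_of_le_ne_top (RingHom.ker_ne_top (constantCoeff (R := R) (σ := σ))) (Ideal.span_le.mpr hs)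

theorem ht_hankelIdeal_le_two_add_card_sub_degree [DecidableRel G.Adj] (v : Fin n) :
    ht (hankelIdeal n K G) ≤ ((2 + (G.edgeFinset.card - G.degree v) : ℕ) : ℕ∞) := by
  set s : Set (MvPolynomial (Fin (n + 1)) K) :=
    {X v.castSucc, X v.succ} ∪ hgenSet n K (G.deleteIncidenceSet v)
  have hproper : Ideal.span s ≠ ⊤ := by
    apply span_ne_top_of_forall_constantCoeff_eq_zero
    rintro _ ((rfl | rfl) | ⟨i, j, -, -, rfl⟩) <;> simp [hg]
  have hcard : (hgenSet n K (G.deleteIncidenceSet v)).encard ≤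
      ((G.edgeFinset.card - G.degree v : ℕ) : ℕ∞) := by
    rw [hgenSet_eq_image_edgeSet, ← card_edgeFinset_deleteIncidenceSet,
      ← Set.encard_coe_eq_coe_finsetCard, coe_edgeFinset]
    exact Set.encard_image_le _ _
  calc ht (hankelIdeal n K G)
      ≤ s.encard :=
        ht_le_encard_of_le_span (hankelIdeal_le_span_X_union_deleteIncidenceSet G v) hproper
    _ ≤ Set.encard {X v.castSucc, X v.succ} +
          (hgenSet n K (G.deleteIncidenceSet v)).encard := Set.encard_union_le _ _
    _ ≤ 2 + ((G.edgeFinset.card - G.degree v : ℕ) : ℕ∞) :=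
        add_le_add (Set.encard_pair (X_injective.ne v.castSucc_lt_succ.ne)).le hcard
    _ = _ := by push_cast; rfl

end HankelEdgeIdeal

theorem stmt_14_general (n : ℕ) (K : Type*) [Field K] (T : SimpleGraph (Fin n)) (hT : T.IsTree)
    (hnp : ¬ IsPathGraph T) :
    ht (hankelIdeal n K T) ≤ ((n - 2 : ℕ) : ℕ∞) ∧
      ¬ (mu (hankelIdeal n K T) = ht (hankelIdeal n K T)) := by
  classical
  obtain ⟨v, hv⟩ := exists_three_le_degree_of_not_isPathGraph hT hnp
  have hedges : T.edgeFinset.card + 1 = n := by simpa using hT.card_edgeFinset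
  have hv_le := T.degree_le_card_edgeFinset v
  have hht : ht (hankelIdeal n K T) ≤ ((n - 2 : ℕ) : ℕ∞) :=
    (ht_hankelIdeal_le_two_add_card_sub_degree T v).trans (Nat.cast_le.mpr (by omega))
  have hmu : ((n - 2 : ℕ) : ℕ∞) < mu (hankelIdeal n K T) :=
    (Nat.cast_lt.mpr (by omega)).trans_le (card_edgeFinset_le_mu_hankelIdeal T)
  exact ⟨hht, (hht.trans_lt hmu).ne'⟩

/-- Let `T` be a tree on `n` vertices with a rooted labeling. If `T` is
not a path, then `height I_T ≤ n - 2`; in particular `S/I_T` is not a complete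
intersection. -/
theorem stmt_14 (n : ℕ) (K : Type*) [Field K] (hn : 1 ≤ n)
    (T : SimpleGraph (Fin n)) (hT : T.IsTree)
    (parent : Fin n → Fin n) (hlab : IsRootedLabeling T parent)
    (hnp : ¬ IsPathGraph T) :
    ht (hankelIdeal n K T) ≤ ((n - 2 : ℕ) : ℕ∞) ∧
      ¬ (mu (hankelIdeal n K T) = ht (hankelIdeal n K T)) :=
  stmt_14_general n K T hT hnp
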